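/- Let n be an integer with ω(n) ≥ 15985. Then σ(n)/n ≤ n/φ(n) ≤ 2.32 · log(log τ(n)). -/

import Mathlib

/-!
Since `σ(n) φ(n) ≤ n²`, only the bound on `n / φ(n)` needs work. With `k = ω(n)`, the product
`n / φ(n) = ∏ p / (p - 1)` over the primes `p ∣ n` is at most the same product `f k` over the first
`k` primes, and `τ(n) ≥ 2 ^ k`, so it is enough that `f k ≤ 2.32 log (k log 2)` for `k ≥ 15985`
(`prod_nth_le`).

This inequality is nearly sharp at `k = 15985`. For `15985 ≤ k ≤ 16395` it follows from monotonicity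
and the numerical value `f 16395 ≤ 21.563`, the `16395` primes below `180664` being found by an
explicit computation. From there on one argues by induction on `k`. Adding the prime `x`, which is
the `K`-th one, multiplies `f` by `1 + 1 / (x - 1)`, while `log (k log 2)` grows at least by
`1 / K`; hence the inequality persists as soon as `K log (K log 2) ≤ x - 1`. The prime number
theorem gives this with a relative margin of order `log (log x) / log x`; an upper bound
`π(x) ≤ c x / (log x - 6/5)` with `c > 1` therefore suffices only for bounded `x`, here up to `e ^ 23`
(`count_mul_log_le`). For larger `x` there is enough room for a direct proof from
`f K ≤ 1.9545 log x`, a weak form of Mertens' product theorem (`prod_eulerFactor_le_log`).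

Both inputs come from Chebyshev's method with `N! (N/30)! / ((N/2)! (N/3)! (N/5)!)`, which yields
`0.9212 N - 5 log N ≤ ψ(N) ≤ 1.106 N + 500` (`le_psi`, `psi_le_linear`), followed by partial
summation. In the product theorem the summation starts at `180663`, where the finite product is
known numerically, so that the loss in the Chebyshev constant only enters divided by `log 180663`.
-/

open Real

/-- The sum of the divisors of `n`. -/
def sigmaFn (n : ℕ) : ℕ := ∑ d ∈ n.divisors, d

/-- The number of divisors of `n`. -/
def tauFn (n : ℕ) : ℕ := n.divisors.card

/-! ### The primes below 180664 -/

/-- Trial division by all primes up to `m` at once: for `m < n < (m + 1) ^ 2`, being prime is the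
same as being coprime to `m!`. -/
lemma prime_iff_coprime_factorial {m n : ℕ} (h1 : m < n) (h2 : n < (m + 1) ^ 2) :
    n.Prime ↔ Nat.gcd n m.factorial = 1 := by
  constructor
  · intro hp
    refine (Nat.Prime.coprime_iff_not_dvd hp).2 fun hd => ?_
    exact absurd ((Nat.Prime.dvd_factorial hp).1 hd) (by omega)
  · intro hc
    by_contra hnp
    have hm : 0 < m := by
      rcases Nat.eq_zero_or_pos m with rfl | h
      · omega
      · exact h
    have hsq := Nat.minFac_sq_le_self (by omega : 0 < n) hnp
    have hle : n.minFac ≤ m := by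
      by_contra hlt
      have : (m + 1) ^ 2 ≤ n.minFac ^ 2 := Nat.pow_le_pow_left (by omega) 2
      omega
    have hdvd : n.minFac ∣ Nat.gcd n m.factorial :=
      Nat.dvd_gcd (Nat.minFac_dvd n) (Nat.dvd_factorial (Nat.minFac_pos n) hle)
    rw [hc, Nat.dvd_one, Nat.minFac_eq_one_iff] at hdvd
    omega

/-- Number of `i` in `[j, j + 2 ^ d)` with `2 * i + 1` coprime to `Q`. The binary recursion keeps
the evaluation depth logarithmic, and the raw `Nat` operations are those the kernel
computes on numerals directly. -/
def cntTree (Q d : ℕ) : ℕ → ℕ :=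
  Nat.rec (fun j => cond (Nat.beq (Nat.gcd (Nat.succ (Nat.mul 2 j)) Q) 1) 1 0)
    (fun d ih j => Nat.add (ih j) (ih (Nat.add j (Nat.pow 2 d)))) d

/-- Fixed-point upper approximation, in units of `10 ^ (-15)`, to the product of
`(2 * i + 1) / (2 * i)` over the `i` in `[j, j + 2 ^ d)` with `2 * i + 1` coprime to `Q`. -/
def prodTree (Q d : ℕ) : ℕ → ℕ :=
  Nat.rec (fun j => cond (Nat.beq (Nat.gcd (Nat.succ (Nat.mul 2 j)) Q) 1)
      (Nat.add 1000000000000000 (Nat.succ (Nat.div 1000000000000000 (Nat.mul 2 j))))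
      1000000000000000)
    (fun d ih j => Nat.succ (Nat.div (Nat.mul (ih j) (ih (Nat.add j (Nat.pow 2 d))))
      1000000000000000)) d

/-- The Euler factor `n / (n - 1)` at a prime `n`, and `1` at all other `n`. -/
noncomputable def eulerFactor (n : ℕ) : ℝ := if n.Prime then (n : ℝ) / ((n : ℝ) - 1) else 1

lemma eulerFactor_nonneg (n : ℕ) : 0 ≤ eulerFactor n := by
  unfold eulerFactor
  split_ifs with h
  · have : (1 : ℝ) ≤ n := by exact_mod_cast h.one_le
    exact div_nonneg (by linarith) (by linarith)
  · norm_num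

lemma cntTree_eq (m d j : ℕ) (h1 : m < 2 * j + 1) (hj : 1 < j)
    (h2 : 2 * (j + 2 ^ d) < (m + 1) ^ 2 + 1) :
    ∑ n ∈ Finset.Ico (2 * j) (2 * (j + 2 ^ d)), (if n.Prime then 1 else 0) =
      cntTree m.factorial d j := by
  induction d generalizing j with
  | zero =>
    have e : cntTree m.factorial 0 j =
        cond (Nat.beq (Nat.gcd (2 * j + 1) m.factorial) 1) 1 0 := rfl
    have hI : Finset.Ico (2 * j) (2 * (j + 2 ^ 0)) = {2 * j, 2 * j + 1} := by
      ext x; simp; omega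
    have hev : ¬ (2 * j).Prime := Nat.not_prime_mul (by norm_num) (by omega)
    have hiff := prime_iff_coprime_factorial (m := m) (n := 2 * j + 1) h1 (by
      simp at h2; omega)
    rw [e, hI, Finset.sum_pair (by omega), if_neg hev, zero_add]
    by_cases hp : (2 * j + 1).Prime
    · rw [if_pos hp, hiff.1 hp]; rfl
    · have : Nat.beq (Nat.gcd (2 * j + 1) m.factorial) 1 = false := by
        rw [← Bool.not_eq_true, Nat.beq_eq]
        exact fun h => hp (hiff.2 h)
      rw [if_neg hp, this]; rfl
  | succ d ih =>
    have e : cntTree m.factorial (d + 1) j =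
        cntTree m.factorial d j + cntTree m.factorial d (j + 2 ^ d) := rfl
    have hp := pow_succ 2 d
    have hpos : 0 < 2 ^ d := by positivity
    rw [e, ← ih j h1 hj (by omega), ← ih (j + 2 ^ d) (by omega) (by omega) (by omega),
      Finset.sum_Ico_consecutive _ (by omega) (by omega)]
    congr 2
    omega

lemma prod_le_prodTree (m d j : ℕ) (h1 : m < 2 * j + 1) (hj : 1 < j)
    (h2 : 2 * (j + 2 ^ d) < (m + 1) ^ 2 + 1) :
    ∏ n ∈ Finset.Ico (2 * j) (2 * (j + 2 ^ d)), eulerFactor n ≤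
      (prodTree m.factorial d j : ℝ) / 10 ^ 15 := by
  -- integer division rounded up dominates real division
  have hdiv : ∀ a b : ℕ, 0 < b → (a : ℝ) / b ≤ ((a / b + 1 : ℕ) : ℝ) := by
    intro a b hb
    rw [div_le_iff₀ (by exact_mod_cast hb)]
    have := Nat.lt_div_mul_add (a := a) hb
    exact_mod_cast (by nlinarith : a ≤ (a / b + 1) * b)
  induction d generalizing j with
  | zero =>
    have e : prodTree m.factorial 0 j =
        cond (Nat.beq (Nat.gcd (2 * j + 1) m.factorial) 1)
          (1000000000000000 + (1000000000000000 / (2 * j) + 1)) 1000000000000000 := rfl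
    have hI : Finset.Ico (2 * j) (2 * (j + 2 ^ 0)) = {2 * j, 2 * j + 1} := by
      ext x; simp; omega
    have hev : ¬ (2 * j).Prime := Nat.not_prime_mul (by norm_num) (by omega)
    have hiff := prime_iff_coprime_factorial (m := m) (n := 2 * j + 1) h1 (by
      simp at h2; omega)
    rw [e, hI, Finset.prod_pair (by omega)]
    simp only [eulerFactor]
    rw [if_neg hev, one_mul]
    by_cases hp : (2 * j + 1).Prime
    · rw [if_pos hp, hiff.1 hp]
      have h3 := hdiv 1000000000000000 (2 * j) (by omega)
      have hj' : (0 : ℝ) < 2 * j := by have : 0 < j := by omega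
                                       positivity
      rw [le_div_iff₀ (by positivity)]
      have : ((2 * j + 1 : ℕ) : ℝ) / (((2 * j + 1 : ℕ) : ℝ) - 1) * 10 ^ 15 =
          1000000000000000 + 1000000000000000 / (2 * j) := by
        push_cast
        rw [add_sub_cancel_right]
        field_simp
        ring
      rw [this]
      push_cast at h3
      simp only [cond]
      push_cast
      linarith
    · have : Nat.beq (Nat.gcd (2 * j + 1) m.factorial) 1 = false := by
        rw [← Bool.not_eq_true, Nat.beq_eq]
        exact fun h => hp (hiff.2 h)
      rw [if_neg hp, this]
      norm_num
  | succ d ih =>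
    have e : prodTree m.factorial (d + 1) j =
        (prodTree m.factorial d j * prodTree m.factorial d (j + 2 ^ d)) / 1000000000000000 + 1 :=
      rfl
    have hp := pow_succ 2 d
    have hpos : 0 < 2 ^ d := by positivity
    have hr : 2 * (j + 2 ^ (d + 1)) = 2 * (j + 2 ^ d + 2 ^ d) := by omega
    rw [e, hr, ← Finset.prod_Ico_consecutive _ (by omega : 2 * j ≤ 2 * (j + 2 ^ d)) (by omega)]
    refine (mul_le_mul (ih j h1 hj (by omega)) (ih (j + 2 ^ d) (by omega) (by omega) (by omega))
      (Finset.prod_nonneg fun _ _ => eulerFactor_nonneg _) (by positivity)).trans ?_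
    have h3 := hdiv (prodTree m.factorial d j * prodTree m.factorial d (j + 2 ^ d))
      1000000000000000 (by norm_num)
    push_cast at h3 ⊢
    rw [le_div_iff₀ (by positivity)]
    refine le_trans (le_of_eq ?_) h3
    norm_num
    ring

/-- The numeral `430!`; stored as a numeral so that the kernel does not recompute it. -/
def factorial430 : ℕ :=
  229465293678129211627173056099189068849352074140443334092009022868999642517619375728687468344160474470579121941700557753502724079082182688928472391488239220152550170633427480461841825091949094197944288801357794156601367090702457219551514694795041383014902497577944077036236488929813770982742476458637464014272144977108852373042517892799660381090776777345371874117528593766939404515022294585579229922895600270030646036593059021947665441750732474518228489659229220093971354782283841767339547932855683095663265044318658601301245012561049450544394753196869136356252131689854879575020367124223347906116180418225704758891534670308464690380805597256296500766587710946531721930047888093198443316682517823114800094779410555285227270126871474681260367085339120769396405168499546914951077942805409105929508281977033786695663759301972623962312464326983680000000000000000000000000000000000000000000000000000000000000000000000000000000000000000000000000000000000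

lemma factorial430_eq : factorial430 = Nat.factorial 430 := by decide +kernel

lemma sum_prime_of_cntTree {m Q d j a b c : ℕ} (h : Nat.beq (cntTree Q d j) c = true)
    (hQ : Q = m.factorial) (ha : a = 2 * j) (hb : b = 2 * (j + 2 ^ d)) (h1 : m < 2 * j + 1)
    (hj : 1 < j) (h2 : 2 * (j + 2 ^ d) < (m + 1) ^ 2 + 1) :
    ∑ n ∈ Finset.Ico a b, (if n.Prime then 1 else 0) = c := by
  subst hQ ha hb
  rw [cntTree_eq m d j h1 hj h2]
  exact Nat.eq_of_beq_eq_true h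

lemma prod_eulerFactor_of_prodTree {m Q d j a b c : ℕ}
    (h : Nat.ble (prodTree Q d j) c = true)
    (hQ : Q = m.factorial) (ha : a = 2 * j) (hb : b = 2 * (j + 2 ^ d)) (h1 : m < 2 * j + 1)
    (hj : 1 < j) (h2 : 2 * (j + 2 ^ d) < (m + 1) ^ 2 + 1) :
    ∏ n ∈ Finset.Ico a b, eulerFactor n ≤ (c : ℝ) / 10 ^ 15 := by
  subst hQ ha hb
  refine (prod_le_prodTree m d j h1 hj h2).trans ?_
  have := Nat.le_of_ble_eq_true h
  gcongr

lemma sum_prime_lt_20 : ∑ n ∈ Finset.Ico 0 20, (if n.Prime then 1 else 0) = 8 := by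
  decide +kernel

lemma sum_prime_20 : ∑ n ∈ Finset.Ico 20 276, (if n.Prime then 1 else 0) = 50 :=
  sum_prime_of_cntTree (m := 20) (Q := (Nat.factorial 20)) (d := 7) (j := 10) (by decide +kernel) rfl
    (by norm_num) (by norm_num) (by norm_num) (by norm_num) (by norm_num)

lemma prod_eulerFactor_20 : ∏ n ∈ Finset.Ico 20 276, eulerFactor n ≤
    (1730199183000000 : ℕ) / 10 ^ 15 :=
  prod_eulerFactor_of_prodTree (m := 20) (Q := (Nat.factorial 20)) (d := 7) (j := 10)
    (by decide +kernel) rfl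
    (by norm_num) (by norm_num) (by norm_num) (by norm_num) (by norm_num)

lemma sum_prime_276 : ∑ n ∈ Finset.Ico 276 404, (if n.Prime then 1 else 0) = 21 :=
  sum_prime_of_cntTree (m := 20) (Q := (Nat.factorial 20)) (d := 6) (j := 138) (by decide +kernel) rfl
    (by norm_num) (by norm_num) (by norm_num) (by norm_num) (by norm_num)

lemma prod_eulerFactor_276 : ∏ n ∈ Finset.Ico 276 404, eulerFactor n ≤
    (1064627326000000 : ℕ) / 10 ^ 15 :=
  prod_eulerFactor_of_prodTree (m := 20) (Q := (Nat.factorial 20)) (d := 6) (j := 138)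
    (by decide +kernel) rfl
    (by norm_num) (by norm_num) (by norm_num) (by norm_num) (by norm_num)

lemma sum_prime_404 : ∑ n ∈ Finset.Ico 404 436, (if n.Prime then 1 else 0) = 5 :=
  sum_prime_of_cntTree (m := 20) (Q := (Nat.factorial 20)) (d := 4) (j := 202) (by decide +kernel) rfl
    (by norm_num) (by norm_num) (by norm_num) (by norm_num) (by norm_num)

lemma prod_eulerFactor_404 : ∏ n ∈ Finset.Ico 404 436, eulerFactor n ≤
    (1011921110000000 : ℕ) / 10 ^ 15 :=
  prod_eulerFactor_of_prodTree (m := 20) (Q := (Nat.factorial 20)) (d := 4) (j := 202)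
    (by decide +kernel) rfl
    (by norm_num) (by norm_num) (by norm_num) (by norm_num) (by norm_num)

lemma sum_prime_436 : ∑ n ∈ Finset.Ico 436 440, (if n.Prime then 1 else 0) = 1 :=
  sum_prime_of_cntTree (m := 20) (Q := (Nat.factorial 20)) (d := 1) (j := 218) (by decide +kernel) rfl
    (by norm_num) (by norm_num) (by norm_num) (by norm_num) (by norm_num)

lemma prod_eulerFactor_436 : ∏ n ∈ Finset.Ico 436 440, eulerFactor n ≤
    (1002283106000000 : ℕ) / 10 ^ 15 :=
  prod_eulerFactor_of_prodTree (m := 20) (Q := (Nat.factorial 20)) (d := 1) (j := 218)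
    (by decide +kernel) rfl
    (by norm_num) (by norm_num) (by norm_num) (by norm_num) (by norm_num)

lemma sum_prime_440 : ∑ n ∈ Finset.Ico 440 131512, (if n.Prime then 1 else 0) = 12202 :=
  sum_prime_of_cntTree (m := 430) (Q := factorial430) (d := 16) (j := 220) (by decide +kernel) factorial430_eq
    (by norm_num) (by norm_num) (by norm_num) (by norm_num) (by norm_num)

lemma prod_eulerFactor_440 : ∏ n ∈ Finset.Ico 440 131512, eulerFactor n ≤
    (1922211830000000 : ℕ) / 10 ^ 15 :=
  prod_eulerFactor_of_prodTree (m := 430) (Q := factorial430) (d := 16) (j := 220)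
    (by decide +kernel) factorial430_eq
    (by norm_num) (by norm_num) (by norm_num) (by norm_num) (by norm_num)

lemma sum_prime_131512 : ∑ n ∈ Finset.Ico 131512 164280, (if n.Prime then 1 else 0) = 2753 :=
  sum_prime_of_cntTree (m := 430) (Q := factorial430) (d := 14) (j := 65756) (by decide +kernel) factorial430_eq
    (by norm_num) (by norm_num) (by norm_num) (by norm_num) (by norm_num)

lemma prod_eulerFactor_131512 : ∏ n ∈ Finset.Ico 131512 164280, eulerFactor n ≤
    (1018876288000000 : ℕ) / 10 ^ 15 :=
  prod_eulerFactor_of_prodTree (m := 430) (Q := factorial430) (d := 14) (j := 65756)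
    (by decide +kernel) factorial430_eq
    (by norm_num) (by norm_num) (by norm_num) (by norm_num) (by norm_num)

lemma sum_prime_164280 : ∑ n ∈ Finset.Ico 164280 180664, (if n.Prime then 1 else 0) = 1355 :=
  sum_prime_of_cntTree (m := 430) (Q := factorial430) (d := 13) (j := 82140) (by decide +kernel) factorial430_eq
    (by norm_num) (by norm_num) (by norm_num) (by norm_num) (by norm_num)

lemma prod_eulerFactor_164280 : ∏ n ∈ Finset.Ico 164280 180664, eulerFactor n ≤
    (1007887335000000 : ℕ) / 10 ^ 15 :=
  prod_eulerFactor_of_prodTree (m := 430) (Q := factorial430) (d := 13) (j := 82140)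
    (by decide +kernel) factorial430_eq
    (by norm_num) (by norm_num) (by norm_num) (by norm_num) (by norm_num)

lemma count_prime_eq_sum (N : ℕ) :
    Nat.count Nat.Prime N = ∑ n ∈ Finset.Ico 0 N, (if n.Prime then 1 else 0) := by
  rw [Nat.count_eq_card_filter_range, Finset.card_filter, Finset.range_eq_Ico]

/-- There are exactly 16395 primes below 180664. -/
theorem count_prime_180664 : Nat.count Nat.Prime 180664 = 16395 := by
  have addstep : ∀ {a b c u v : ℕ}, a ≤ b → b ≤ c →
      ∑ n ∈ Finset.Ico a b, (if n.Prime then 1 else 0) = u →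
      ∑ n ∈ Finset.Ico b c, (if n.Prime then 1 else 0) = v →
      ∑ n ∈ Finset.Ico a c, (if n.Prime then 1 else 0) = u + v := by
    intro a b c u v hab hbc hu hv
    rw [← Finset.sum_Ico_consecutive _ hab hbc, hu, hv]
  have h1 := addstep (by norm_num) (by norm_num) sum_prime_lt_20 sum_prime_20
  have h2 := addstep (by norm_num) (by norm_num) h1 sum_prime_276
  have h3 := addstep (by norm_num) (by norm_num) h2 sum_prime_404
  have h4 := addstep (by norm_num) (by norm_num) h3 sum_prime_436
  have h5 := addstep (by norm_num) (by norm_num) h4 sum_prime_440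
  have h6 := addstep (by norm_num) (by norm_num) h5 sum_prime_131512
  have h7 := addstep (by norm_num) (by norm_num) h6 sum_prime_164280
  exact (count_prime_eq_sum _).trans h7

/-- The Euler product over the primes below 180664 is at most 21.563. -/
theorem prod_eulerFactor_180664 : ∏ n ∈ Finset.range 180664, eulerFactor n ≤ 21.563 := by
  have h0 : ∏ n ∈ Finset.Ico 0 20, eulerFactor n ≤ 5.8471318 := by
    simp only [← Finset.range_eq_Ico, Finset.prod_range_succ, Finset.prod_range_zero, eulerFactor]
    norm_num
  have nn : ∀ a b : ℕ, 0 ≤ ∏ n ∈ Finset.Ico a b, eulerFactor n :=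
    fun a b => Finset.prod_nonneg fun _ _ => eulerFactor_nonneg _
  have mulstep : ∀ {a b c : ℕ} {U V : ℝ}, a ≤ b → b ≤ c →
      ∏ n ∈ Finset.Ico a b, eulerFactor n ≤ U → ∏ n ∈ Finset.Ico b c, eulerFactor n ≤ V →
      ∏ n ∈ Finset.Ico a c, eulerFactor n ≤ U * V := by
    intro a b c U V hab hbc hU hV
    rw [← Finset.prod_Ico_consecutive _ hab hbc]
    exact mul_le_mul hU hV (nn _ _) ((nn _ _).trans hU)
  rw [Finset.range_eq_Ico]
  have h1 := mulstep (by norm_num) (by norm_num) h0 prod_eulerFactor_20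
  have h2 := mulstep (by norm_num) (by norm_num) h1 prod_eulerFactor_276
  have h3 := mulstep (by norm_num) (by norm_num) h2 prod_eulerFactor_404
  have h4 := mulstep (by norm_num) (by norm_num) h3 prod_eulerFactor_436
  have h5 := mulstep (by norm_num) (by norm_num) h4 prod_eulerFactor_440
  have h6 := mulstep (by norm_num) (by norm_num) h5 prod_eulerFactor_131512
  have h7 := mulstep (by norm_num) (by norm_num) h6 prod_eulerFactor_164280
  refine h7.trans ?_
  norm_num

/-! ### Chebyshev's bounds for the summatory von Mangoldt function -/

lemma psi_natCast (N : ℕ) :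
    Chebyshev.psi (N : ℝ) = ∑ d ∈ Finset.Ioc 0 N, ArithmeticFunction.vonMangoldt d := by
  simp [Chebyshev.psi]

/-- Legendre's formula, with a range of summation that may exceed `N`. -/
lemma log_factorial_eq_sum (N M : ℕ) (h : N ≤ M) :
    Real.log (N.factorial : ℝ) =
      ∑ d ∈ Finset.Ioc 0 M, ArithmeticFunction.vonMangoldt d * ((N / d : ℕ) : ℝ) := by
  induction N with
  | zero => simp
  | succ N ih =>
    have hdiv : (N + 1).divisors = (Finset.Ioc 0 M).filter (fun d => d ∣ N + 1) := by
      ext d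
      simp only [Nat.mem_divisors, Finset.mem_filter, Finset.mem_Ioc]
      constructor
      · rintro ⟨hd, -⟩
        exact ⟨⟨Nat.pos_of_dvd_of_pos hd (by omega), (Nat.le_of_dvd (by omega) hd).trans h⟩, hd⟩
      · rintro ⟨-, hd⟩
        exact ⟨hd, by omega⟩
    have hlog : Real.log ((N + 1 : ℕ) : ℝ) = ∑ d ∈ Finset.Ioc 0 M,
        ArithmeticFunction.vonMangoldt d * (if d ∣ N + 1 then 1 else 0) := by
      rw [← ArithmeticFunction.vonMangoldt_sum, hdiv, Finset.sum_filter]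
      exact Finset.sum_congr rfl fun d _ => by split_ifs <;> simp
    rw [Nat.factorial_succ, Nat.cast_mul, Real.log_mul (by positivity) (by positivity),
      ih (by omega), hlog, ← Finset.sum_add_distrib]
    refine Finset.sum_congr rfl fun d _ => ?_
    rw [Nat.succ_div]
    split_ifs <;> push_cast <;> ring

/-- Chebyshev's combination `⌊m⌋ - ⌊m/2⌋ - ⌊m/3⌋ - ⌊m/5⌋ + ⌊m/30⌋` only takes the values
`0` and `1`, and equals `1` for `1 ≤ m ≤ 5`. -/
lemma chebyshev_floor (m : ℕ) :
    m / 2 + m / 3 + m / 5 ≤ m + m / 30 ∧ m + m / 30 ≤ m / 2 + m / 3 + m / 5 + 1 ∧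
      (1 ≤ m → m < 6 → m + m / 30 = m / 2 + m / 3 + m / 5 + 1) := by
  obtain ⟨q, r, hr, rfl⟩ : ∃ q r, r < 30 ∧ m = 30 * q + r :=
    ⟨m / 30, m % 30, Nat.mod_lt _ (by norm_num), (Nat.div_add_mod m 30).symm⟩
  refine ⟨?_, ?_, fun _ _ => ?_⟩ <;> interval_cases r <;> omega

/-- The logarithm of Chebyshev's quotient `N! (N/30)! / ((N/2)! (N/3)! (N/5)!)`, the
arguments of the factorials being rounded down. -/
noncomputable def chebyshevLog (N : ℕ) : ℝ :=
  Real.log (N.factorial : ℝ) - Real.log ((N / 2).factorial : ℝ)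
    - Real.log ((N / 3).factorial : ℝ) - Real.log ((N / 5).factorial : ℝ)
    + Real.log ((N / 30).factorial : ℝ)

lemma chebyshevLog_eq_sum (N : ℕ) :
    chebyshevLog N = ∑ d ∈ Finset.Ioc 0 N, ArithmeticFunction.vonMangoldt d *
      (((N / d : ℕ) : ℝ) - ((N / d / 2 : ℕ) : ℝ) - ((N / d / 3 : ℕ) : ℝ)
        - ((N / d / 5 : ℕ) : ℝ) + ((N / d / 30 : ℕ) : ℝ)) := by
  have hc : ∀ q d : ℕ, N / d / q = N / q / d := fun q d => by
    rw [Nat.div_div_eq_div_mul, Nat.div_div_eq_div_mul, mul_comm]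
  rw [chebyshevLog, log_factorial_eq_sum N N le_rfl,
    log_factorial_eq_sum (N / 2) N (Nat.div_le_self _ _),
    log_factorial_eq_sum (N / 3) N (Nat.div_le_self _ _),
    log_factorial_eq_sum (N / 5) N (Nat.div_le_self _ _),
    log_factorial_eq_sum (N / 30) N (Nat.div_le_self _ _),
    ← Finset.sum_sub_distrib, ← Finset.sum_sub_distrib, ← Finset.sum_sub_distrib,
    ← Finset.sum_add_distrib]
  refine Finset.sum_congr rfl fun d _ => ?_
  rw [hc 2, hc 3, hc 5, hc 30]
  ring

lemma chebyshevLog_le_psi (N : ℕ) : chebyshevLog N ≤ Chebyshev.psi N := by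
  rw [chebyshevLog_eq_sum, psi_natCast]
  refine Finset.sum_le_sum fun d _ => mul_le_of_le_one_right
    ArithmeticFunction.vonMangoldt_nonneg ?_
  have : ((N / d + N / d / 30 : ℕ) : ℝ) ≤
      ((N / d / 2 + N / d / 3 + N / d / 5 + 1 : ℕ) : ℝ) :=
    Nat.cast_le.2 (chebyshev_floor (N / d)).2.1
  push_cast at this
  linarith

/-- Only the terms `d > N / 6` are kept; for these the floor combination equals `1`. -/
lemma psi_sub_psi_le_chebyshevLog (N : ℕ) :
    Chebyshev.psi N - Chebyshev.psi ((N / 6 : ℕ) : ℝ) ≤ chebyshevLog N := by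
  have hpsi : Chebyshev.psi ((N / 6 : ℕ) : ℝ) = ∑ d ∈ Finset.Ioc 0 N,
      (if d ≤ N / 6 then ArithmeticFunction.vonMangoldt d else 0) := by
    rw [psi_natCast, ← Finset.sum_filter]
    congr 1
    ext d
    simp only [Finset.mem_Ioc, Finset.mem_filter]
    omega
  rw [chebyshevLog_eq_sum, hpsi, psi_natCast, ← Finset.sum_sub_distrib]
  refine Finset.sum_le_sum fun d hd => ?_
  rw [Finset.mem_Ioc] at hd
  obtain ⟨c1, -, c3⟩ := chebyshev_floor (N / d)
  have hL : 0 ≤ ArithmeticFunction.vonMangoldt d := ArithmeticFunction.vonMangoldt_nonneg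
  split_ifs with h
  · rw [sub_self]
    refine mul_nonneg hL ?_
    have : ((N / d / 2 + N / d / 3 + N / d / 5 : ℕ) : ℝ) ≤ ((N / d + N / d / 30 : ℕ) : ℝ) :=
      Nat.cast_le.2 c1
    push_cast at this
    linarith
  · have h1 : 1 ≤ N / d := (Nat.one_le_div_iff hd.1).2 hd.2
    have h6 : N / d < 6 := by
      rw [Nat.div_lt_iff_lt_mul hd.1]
      omega
    have : ((N / d + N / d / 30 : ℕ) : ℝ) =
        ((N / d / 2 + N / d / 3 + N / d / 5 + 1 : ℕ) : ℝ) := by rw [c3 h1 h6]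
    push_cast at this
    rw [sub_zero]
    refine le_of_eq ?_
    rw [show ((N / d : ℕ) : ℝ) - ((N / d / 2 : ℕ) : ℝ) - ((N / d / 3 : ℕ) : ℝ)
        - ((N / d / 5 : ℕ) : ℝ) + ((N / d / 30 : ℕ) : ℝ) = 1 by linarith, mul_one]

lemma log_add_one_sub_log (m : ℕ) (hm : 1 ≤ m) :
    (m : ℝ) * (Real.log ((m : ℝ) + 1) - Real.log m) ≤ 1 ∧
      1 ≤ ((m : ℝ) + 1) * (Real.log ((m : ℝ) + 1) - Real.log m) := by
  have h0 : (0 : ℝ) < m := by exact_mod_cast hm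
  rw [← Real.log_div (by positivity) (by positivity)]
  constructor
  · have := Real.log_le_sub_one_of_pos (x := ((m : ℝ) + 1) / m) (by positivity)
    calc (m : ℝ) * Real.log (((m : ℝ) + 1) / m) ≤ m * (((m : ℝ) + 1) / m - 1) := by gcongr
      _ = 1 := by field_simp; ring
  · have := Real.one_sub_inv_le_log_of_pos (x := ((m : ℝ) + 1) / m) (by positivity)
    calc (1 : ℝ) = (m + 1) * (1 - (((m : ℝ) + 1) / m)⁻¹) := by field_simp; ring
      _ ≤ _ := by gcongr

/-- Stirling's formula up to an error of order `log m`. -/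
lemma log_factorial_bounds (m : ℕ) (hm : 1 ≤ m) :
    (m : ℝ) * Real.log m - m + 1 ≤ Real.log (m.factorial : ℝ) ∧
      Real.log (m.factorial : ℝ) ≤ (m : ℝ) * Real.log m - m + Real.log m + 1 := by
  induction m, hm using Nat.le_induction with
  | base => simp
  | succ m hm ih =>
    obtain ⟨h1, h2⟩ := log_add_one_sub_log m hm
    rw [Nat.factorial_succ, Nat.cast_mul, Real.log_mul (by positivity) (by positivity)]
    push_cast
    constructor <;> nlinarith [ih.1, ih.2]

/-- Stirling bounds for `⌊N / q⌋!` in terms of the real quotient `N / q`. -/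
lemma log_factorial_div_bounds (N q : ℕ) (hq : 1 ≤ q) (hN : q ≤ N) :
    (N / q : ℝ) * Real.log (N / q) - N / q - Real.log (N / q) + 1 ≤
        Real.log ((N / q).factorial : ℝ) ∧
      Real.log ((N / q).factorial : ℝ) ≤
        (N / q : ℝ) * Real.log (N / q) - N / q + Real.log (N / q) + 1 := by
  have hm : 1 ≤ N / q := (Nat.one_le_div_iff (by omega)).2 hN
  obtain ⟨b1, b2⟩ := log_factorial_bounds (N / q) hm
  have hmy : ((N / q : ℕ) : ℝ) ≤ (N : ℝ) / q := Nat.cast_div_le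
  have hym : (N : ℝ) / q ≤ ((N / q : ℕ) : ℝ) + 1 := by
    rw [div_le_iff₀ (by exact_mod_cast hq)]
    have := Nat.lt_div_mul_add (a := N) (b := q) (by omega)
    exact_mod_cast (by nlinarith : N ≤ (N / q + 1) * q)
  generalize N / q = m at *
  generalize (N : ℝ) / q = y at *
  have hm1 : (1 : ℝ) ≤ m := by exact_mod_cast hm
  have hm0 : (0 : ℝ) < m := by linarith
  have hy0 : 0 < y := by linarith
  have hlog : Real.log m ≤ Real.log y := Real.log_le_log hm0 hmy
  have hlogm : 0 ≤ Real.log m := Real.log_nonneg hm1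
  have e1 : m * (Real.log y - Real.log m) ≤ y - m := by
    rw [← Real.log_div hy0.ne' hm0.ne']
    have := Real.log_le_sub_one_of_pos (x := y / m) (by positivity)
    calc m * Real.log (y / m) ≤ m * (y / m - 1) := by gcongr
      _ = y - m := by field_simp
  have e2 : y - m ≤ y * (Real.log y - Real.log m) := by
    rw [← Real.log_div hy0.ne' hm0.ne']
    have := Real.one_sub_inv_le_log_of_pos (x := y / m) (by positivity)
    calc y - m = y * (1 - (y / m)⁻¹) := by field_simp
      _ ≤ _ := by gcongr
  constructor
  · nlinarith
  · nlinarith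

/-- Chebyshev's constant `log (2^(1/2) 3^(1/3) 5^(1/5) / 30^(1/30)) = 0.92129…`. -/
noncomputable def chebyshevConst : ℝ :=
  (14 * Real.log 2 + 9 * Real.log 3 + 5 * Real.log 5) / 30

lemma log_three_bounds : 1.0986 ≤ Real.log 3 ∧ Real.log 3 ≤ 1.098621 := by
  -- `3 ^ 12` is close to `2 ^ 19`
  have h : 12 * Real.log 3 = 19 * Real.log 2 + Real.log (531441 / 524288) := by
    have e1 : Real.log ((3 : ℝ) ^ 12) = 12 * Real.log 3 := by rw [Real.log_pow]; norm_num
    have e2 : Real.log ((2 : ℝ) ^ 19) = 19 * Real.log 2 := by rw [Real.log_pow]; norm_num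
    rw [← e1, ← e2, ← Real.log_mul (by norm_num) (by norm_num)]
    norm_num
  have h1 := Real.log_le_sub_one_of_pos (x := 531441 / 524288) (by norm_num)
  have h2 := Real.one_sub_inv_le_log_of_pos (x := 531441 / 524288) (by norm_num)
  have := Real.log_two_gt_d9
  have := Real.log_two_lt_d9
  norm_num at h1 h2 ⊢
  constructor <;> linarith

lemma log_five_bounds : 1.6093 ≤ Real.log 5 ∧ Real.log 5 ≤ 1.60954 := by
  -- `5 ^ 3` is close to `2 ^ 7`
  have h : 3 * Real.log 5 = 7 * Real.log 2 + Real.log (125 / 128) := by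
    have e1 : Real.log ((5 : ℝ) ^ 3) = 3 * Real.log 5 := by rw [Real.log_pow]; norm_num
    have e2 : Real.log ((2 : ℝ) ^ 7) = 7 * Real.log 2 := by rw [Real.log_pow]; norm_num
    rw [← e1, ← e2, ← Real.log_mul (by norm_num) (by norm_num)]
    norm_num
  have h1 := Real.log_le_sub_one_of_pos (x := 125 / 128) (by norm_num)
  have h2 := Real.one_sub_inv_le_log_of_pos (x := 125 / 128) (by norm_num)
  have := Real.log_two_gt_d9
  have := Real.log_two_lt_d9
  norm_num at h1 h2 ⊢
  constructor <;> linarith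

lemma chebyshevConst_bounds : 0.9212 ≤ chebyshevConst ∧ chebyshevConst ≤ 0.92132 := by
  have := Real.log_two_gt_d9
  have := Real.log_two_lt_d9
  have := log_three_bounds
  have := log_five_bounds
  unfold chebyshevConst
  norm_num at *
  constructor <;> linarith

lemma chebyshevLog_bounds (N : ℕ) (hN : 30 ≤ N) :
    chebyshevConst * N - 5 * Real.log N ≤ chebyshevLog N ∧
      chebyshevLog N ≤ chebyshevConst * N + 5 * Real.log N := by
  have hN0 : (N : ℝ) ≠ 0 := by
    have : (0 : ℝ) < N := by exact_mod_cast (by omega : 0 < N)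
    exact this.ne'
  obtain ⟨l1, u1⟩ := log_factorial_div_bounds N 1 (by norm_num) (by omega)
  obtain ⟨l2, u2⟩ := log_factorial_div_bounds N 2 (by norm_num) (by omega)
  obtain ⟨l3, u3⟩ := log_factorial_div_bounds N 3 (by norm_num) (by omega)
  obtain ⟨l5, u5⟩ := log_factorial_div_bounds N 5 (by norm_num) (by omega)
  obtain ⟨l30, u30⟩ := log_factorial_div_bounds N 30 (by norm_num) (by omega)
  have e30 : Real.log 30 = Real.log 2 + Real.log 3 + Real.log 5 := by
    rw [← Real.log_mul (by norm_num) (by norm_num), ← Real.log_mul (by norm_num) (by norm_num)]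
    norm_num
  push_cast at l1 u1 l2 u2 l3 u3 l5 u5 l30 u30
  rw [Nat.div_one, div_one] at l1 u1
  rw [Real.log_div hN0 (by norm_num)] at l2 u2 l3 u3 l5 u5 l30 u30
  rw [e30] at l30 u30
  have p2 : 0 ≤ Real.log 2 := Real.log_nonneg (by norm_num)
  have p3 := log_three_bounds.1
  have p5 := log_five_bounds.1
  norm_num at p3 p5
  unfold chebyshevLog chebyshevConst
  constructor <;> nlinarith

/-- Tangent line of the logarithm at `exp 12`, with `exp 12 = 162754.…` rounded down. -/
lemma log_le_tangent (x : ℝ) (hx : 0 < x) : Real.log x ≤ 11 + x / 160000 := by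
  have he : (160000 : ℝ) ≤ Real.exp 12 := by
    have h1 := Real.exp_one_gt_d9
    have : Real.exp 12 = Real.exp 1 ^ 12 := by rw [← Real.exp_nat_mul]; norm_num
    rw [this]
    calc (160000 : ℝ) ≤ 2.7182818283 ^ 12 := by norm_num
      _ ≤ _ := by gcongr
  have h := Real.log_le_sub_one_of_pos (x := x / Real.exp 12) (by positivity)
  rw [Real.log_div hx.ne' (Real.exp_pos _).ne', Real.log_exp] at h
  have : x / Real.exp 12 ≤ x / 160000 := by gcongr
  linarith

/-- The recursion `ψ(N) ≤ ψ(N/6) + A N + 5 log N` summed over the scales `N, N/6, N/36, …`; the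
linear coefficient is just above `6 A / 5`. -/
lemma psi_le_aux (N : ℕ) (hN : 1 ≤ N) :
    Chebyshev.psi N ≤ 1.10575 * N + 33 * Real.log N + 130 := by
  induction N using Nat.strong_induction_on with
  | _ N ih =>
    have hN1 : (1 : ℝ) ≤ N := by exact_mod_cast hN
    have hlog : 0 ≤ Real.log N := Real.log_nonneg hN1
    rcases lt_or_ge N 30 with h | h
    · have h1 := Chebyshev.psi_le_const_mul_self (x := N) (by linarith)
      have h4 : Real.log 4 = 2 * Real.log 2 := by
        rw [show (4 : ℝ) = 2 ^ 2 by norm_num, Real.log_pow]; norm_num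
      have := Real.log_two_lt_d9
      have h29 : (N : ℝ) ≤ 29 := by exact_mod_cast (by omega : N ≤ 29)
      have : (Real.log 4 + 4) * N ≤ 5.39 * N := by
        gcongr
        linarith
      linarith
    · have h6 : 1 ≤ N / 6 := by omega
      have hrec := ih (N / 6) (by omega) h6
      have hdiff := psi_sub_psi_le_chebyshevLog N
      have hup := (chebyshevLog_bounds N h).2
      have hA := chebyshevConst_bounds.2
      have hq : ((N / 6 : ℕ) : ℝ) ≤ (N : ℝ) / 6 := by exact_mod_cast Nat.cast_div_le
      have hql : Real.log ((N / 6 : ℕ) : ℝ) ≤ Real.log N - (Real.log 2 + Real.log 3) := by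
        rw [← Real.log_mul (by norm_num) (by norm_num), ← Real.log_div (by positivity)
          (by norm_num)]
        refine Real.log_le_log (by exact_mod_cast h6) (hq.trans (le_of_eq (by norm_num)))
      have ht := log_le_tangent N (by linarith)
      have l2 := Real.log_two_gt_d9
      have l3 := log_three_bounds.1
      have hAN : chebyshevConst * N ≤ 0.92132 * N := by gcongr
      norm_num at *
      linarith

theorem psi_le_linear (N : ℕ) : Chebyshev.psi N ≤ 1.106 * N + 500 := by
  rcases Nat.eq_zero_or_pos N with rfl | h
  · norm_num
  · have h0 : (0 : ℝ) < N := by exact_mod_cast h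
    have h1 := psi_le_aux N h
    have h2 := log_le_tangent N h0
    norm_num at *
    linarith

theorem le_psi (N : ℕ) (hN : 30 ≤ N) : 0.9212 * N - 5 * Real.log N ≤ Chebyshev.psi N := by
  have h1 := (chebyshevLog_bounds N hN).1
  have h2 := chebyshevLog_le_psi N
  have h3 := chebyshevConst_bounds.1
  have : (0.9212 : ℝ) * N ≤ chebyshevConst * N := by gcongr
  linarith

/-! ### Partial summation: an upper bound for the prime counting function -/

/-- Abel summation as a comparison principle: if the partial sums of `a` are dominated by those of
`b` up to a constant `c`, the same holds after multiplying by a nonnegative decreasing weight. -/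
lemma sum_mul_le_of_partial_sums (a b w : ℕ → ℝ) (c : ℝ) (y x : ℕ) (hyx : y ≤ x)
    (hw0 : ∀ n, y ≤ n → 0 ≤ w n) (hw : ∀ n, y ≤ n → w (n + 1) ≤ w n)
    (h : ∀ n, y ≤ n → ∑ i ∈ Finset.Ioc y n, a i ≤ c + ∑ i ∈ Finset.Ioc y n, b i) :
    ∑ i ∈ Finset.Ioc y x, a i * w i ≤ c * w y + ∑ i ∈ Finset.Ioc y x, b i * w i := by
  have key : (c + ∑ i ∈ Finset.Ioc y x, b i - ∑ i ∈ Finset.Ioc y x, a i) * w x ≤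
      c * w y + ∑ i ∈ Finset.Ioc y x, b i * w i - ∑ i ∈ Finset.Ioc y x, a i * w i := by
    induction x, hyx using Nat.le_induction with
    | base => simp
    | succ x hx ih =>
      rw [Finset.sum_Ioc_succ_top (by omega), Finset.sum_Ioc_succ_top (by omega),
        Finset.sum_Ioc_succ_top (by omega), Finset.sum_Ioc_succ_top (by omega)]
      have h1 := mul_le_mul_of_nonneg_left (hw x hx) (sub_nonneg.2 (h x hx))
      nlinarith
  have := mul_nonneg (sub_nonneg.2 (h x hyx)) (hw0 x hyx)
  linarith

/-- There are at most 222 primes up to 1400. -/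
lemma count_prime_1401 : Nat.count Nat.Prime 1401 ≤ 222 := by
  -- the bounds are variables here, since unfolding the sums over numeral ranges is expensive
  have addstep : ∀ {a b c u v : ℕ}, a ≤ b → b ≤ c →
      ∑ n ∈ Finset.Ico a b, (if n.Prime then 1 else 0) = u →
      ∑ n ∈ Finset.Ico b c, (if n.Prime then 1 else 0) = v →
      ∑ n ∈ Finset.Ico a c, (if n.Prime then 1 else 0) = u + v := by
    intro a b c u v hab hbc hu hv
    rw [← Finset.sum_Ico_consecutive _ hab hbc, hu, hv]
  have last : ∀ {m N u : ℕ}, N = m + 1 → ¬ m.Prime →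
      ∑ n ∈ Finset.Ico 0 m, (if n.Prime then 1 else 0) = u → Nat.count Nat.Prime N = u := by
    intro m N u hN hp hu
    rw [hN, Nat.count_succ, if_neg hp, count_prime_eq_sum, hu, add_zero]
  have h1 : ∑ n ∈ Finset.Ico 440 952, (if n.Prime then 1 else 0) = 76 :=
    sum_prime_of_cntTree (m := 430) (Q := factorial430) (d := 8) (j := 220)
      (by decide +kernel) factorial430_eq (by norm_num) (by norm_num) (by norm_num) (by norm_num)
      (by norm_num)
  have h2 : ∑ n ∈ Finset.Ico 952 1208, (if n.Prime then 1 else 0) = 36 :=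
    sum_prime_of_cntTree (m := 430) (Q := factorial430) (d := 7) (j := 476)
      (by decide +kernel) factorial430_eq (by norm_num) (by norm_num) (by norm_num) (by norm_num)
      (by norm_num)
  have h3 : ∑ n ∈ Finset.Ico 1208 1336, (if n.Prime then 1 else 0) = 20 :=
    sum_prime_of_cntTree (m := 430) (Q := factorial430) (d := 6) (j := 604)
      (by decide +kernel) factorial430_eq (by norm_num) (by norm_num) (by norm_num) (by norm_num)
      (by norm_num)
  have h4 : ∑ n ∈ Finset.Ico 1336 1400, (if n.Prime then 1 else 0) = 5 :=
    sum_prime_of_cntTree (m := 430) (Q := factorial430) (d := 5) (j := 668)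
      (by decide +kernel) factorial430_eq (by norm_num) (by norm_num) (by norm_num) (by norm_num)
      (by norm_num)
  have s1 := addstep (by norm_num) (by norm_num) sum_prime_lt_20 sum_prime_20
  have s2 := addstep (by norm_num) (by norm_num) s1 sum_prime_276
  have s3 := addstep (by norm_num) (by norm_num) s2 sum_prime_404
  have s4 := addstep (by norm_num) (by norm_num) s3 sum_prime_436
  have s5 := addstep (by norm_num) (by norm_num) s4 h1
  have s6 := addstep (by norm_num) (by norm_num) s5 h2
  have s7 := addstep (by norm_num) (by norm_num) s6 h3
  have s8 := addstep (by norm_num) (by norm_num) s7 h4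
  have s9 := last (N := 1401) (by norm_num) (by norm_num) s8
  exact s9.le

lemma log_1400 : 7.2 ≤ Real.log 1400 := by
  -- `1400 = 2 ^ 8 * 3 ^ 3 / 5 * (7000 / 6912)`
  have h : Real.log 1400 = 8 * Real.log 2 + 3 * Real.log 3 - Real.log 5
      + Real.log (7000 / 6912) := by
    have e1 : Real.log ((2 : ℝ) ^ 8) = 8 * Real.log 2 := by rw [Real.log_pow]; norm_num
    have e2 : Real.log ((3 : ℝ) ^ 3) = 3 * Real.log 3 := by rw [Real.log_pow]; norm_num
    rw [← e1, ← e2, ← Real.log_mul (by norm_num) (by norm_num),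
      ← Real.log_div (by norm_num) (by norm_num), ← Real.log_mul (by norm_num) (by norm_num)]
    norm_num
  have h0 : 0 ≤ Real.log (7000 / 6912) := Real.log_nonneg (by norm_num)
  have := Real.log_two_gt_d9
  have := log_three_bounds.1
  have := log_five_bounds.2
  rw [h]
  linarith

/-- `t / (log t - 6/5)` grows at least as fast as the logarithmic integral once
`log t ≥ 7.2`. -/
lemma inv_log_le_sub (n : ℕ) (hn : 1400 ≤ n) :
    1 / Real.log ((n : ℝ) + 1) ≤
      ((n : ℝ) + 1) / (Real.log ((n : ℝ) + 1) - 1.2) - (n : ℝ) / (Real.log n - 1.2) := by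
  have hn' : (1400 : ℝ) ≤ n := by exact_mod_cast hn
  have hlog : ∀ t : ℝ, (n : ℝ) ≤ t → 7.2 ≤ Real.log t := fun t ht =>
    log_1400.trans (Real.log_le_log (by norm_num) (hn'.trans ht))
  have hder : ∀ t : ℝ, (n : ℝ) ≤ t → HasDerivAt (fun s : ℝ => s / (Real.log s - 1.2))
      ((1 * (Real.log t - 1.2) - t * t⁻¹) / (Real.log t - 1.2) ^ 2) t := by
    intro t ht
    have h7 := hlog t ht
    exact (hasDerivAt_id t).div ((Real.hasDerivAt_log (by linarith)).sub_const _) (by linarith)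
  have hmvt := Convex.mul_sub_le_image_sub_of_le_deriv (D := Set.Icc (n : ℝ) (n + 1))
    (convex_Icc _ _) (f := fun s : ℝ => s / (Real.log s - 1.2))
    (fun t ht => (hder t ht.1).continuousAt.continuousWithinAt)
    (fun t ht => (hder t (interior_subset ht).1).differentiableAt.differentiableWithinAt)
    (C := 1 / Real.log ((n : ℝ) + 1)) (by
      intro t ht
      have ht' := interior_subset ht
      have h7 := hlog t ht'.1
      have ht0 : t ≠ 0 := by linarith [ht'.1]
      rw [(hder t ht'.1).deriv, mul_inv_cancel₀ ht0]
      have hmono : Real.log t ≤ Real.log ((n : ℝ) + 1) :=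
        Real.log_le_log (by linarith [ht'.1]) ht'.2
      calc 1 / Real.log ((n : ℝ) + 1) ≤ 1 / Real.log t :=
            one_div_le_one_div_of_le (by linarith) hmono
        _ ≤ _ := by
            rw [div_le_div_iff₀ (by linarith) (by nlinarith)]
            nlinarith)
    n (Set.left_mem_Icc.2 (by linarith)) (n + 1) (Set.right_mem_Icc.2 (by linarith)) (by linarith)
  simpa using hmvt

/-- Partial summation from `ψ(x) ≤ 1.106 x + 500`. -/
theorem count_prime_le (x : ℕ) (hx : 1400 ≤ x) :
    (Nat.count Nat.Prime (x + 1) : ℝ) ≤ 292 + 1.106 * ((x : ℝ) / (Real.log x - 1.2)) := by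
  have hlog : ∀ n : ℕ, 1400 ≤ n → 7.2 ≤ Real.log n := fun n hn =>
    log_1400.trans (Real.log_le_log (by norm_num) (by exact_mod_cast hn))
  have h1 : (Nat.count Nat.Prime (x + 1) : ℝ) ≤
      222 + ∑ n ∈ Finset.Ioc 1400 x, ArithmeticFunction.vonMangoldt n * (1 / Real.log n) := by
    induction x, hx using Nat.le_induction with
    | base =>
      rw [Finset.Ioc_self, Finset.sum_empty, add_zero]
      exact_mod_cast count_prime_1401
    | succ x hx ih =>
      rw [Nat.count_succ, Finset.sum_Ioc_succ_top (by omega)]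
      have h7 := hlog (x + 1) (by omega)
      split_ifs with hp
      · rw [ArithmeticFunction.vonMangoldt_apply_prime hp, mul_one_div_cancel (by linarith)]
        push_cast
        linarith
      · have : 0 ≤ ArithmeticFunction.vonMangoldt (x + 1) * (1 / Real.log ((x + 1 : ℕ) : ℝ)) :=
          mul_nonneg ArithmeticFunction.vonMangoldt_nonneg (by positivity)
        push_cast at this ⊢
        linarith
  have h2 := sum_mul_le_of_partial_sums (fun n => ArithmeticFunction.vonMangoldt n)
    (fun _ => 1.106) (fun n => 1 / Real.log n) (1.106 * 1400 + 500) 1400 x hx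
    (fun n hn => by have := hlog n hn; positivity)
    (fun n hn => one_div_le_one_div_of_le (by linarith [hlog n hn])
      (Real.log_le_log (by have : 0 < n := by omega
                           exact_mod_cast this) (by push_cast; linarith)))
    (fun n hn => by
      have h3 := psi_le_linear n
      have h0 : 0 ≤ Chebyshev.psi ((1400 : ℕ) : ℝ) := Chebyshev.psi_nonneg _
      rw [psi_natCast] at h3 h0
      rw [← Finset.sum_Ioc_consecutive _ (Nat.zero_le 1400) hn] at h3
      rw [Finset.sum_const, Nat.card_Ioc, nsmul_eq_mul, Nat.cast_sub hn]
      push_cast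
      linarith)
  have h3 : ∑ n ∈ Finset.Ioc 1400 x, 1.106 * (1 / Real.log (n : ℝ)) ≤
      1.106 * ((x : ℝ) / (Real.log x - 1.2)) - 1.106 * (1400 / (Real.log 1400 - 1.2)) := by
    clear h1 h2
    induction x, hx using Nat.le_induction with
    | base => simp
    | succ x hx ih =>
      rw [Finset.sum_Ioc_succ_top (by omega)]
      have := inv_log_le_sub x hx
      push_cast at this ⊢
      linarith
  have h4 := log_1400
  have h5 : (1400 : ℝ) * (1 / Real.log 1400) ≤ 1400 / (Real.log 1400 - 1.2) := by
    rw [mul_one_div]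
    exact div_le_div_of_nonneg_left (by norm_num) (by linarith) (by linarith)
  have h6 : 1 / Real.log 1400 ≤ 1 / 7.2 := one_div_le_one_div_of_le (by norm_num) h4
  have h7 : (1 : ℝ) / 7.2 ≤ 0.139 := by norm_num
  rw [Nat.cast_ofNat] at h2
  linarith

/-! ### Explicit bounds of Mertens type -/

/-- First Mertens theorem: `n ∑ Λ(d) / d` lies between `log n!` and `log n! + ψ(n)`. -/
lemma sum_vonMangoldt_div_bounds (n : ℕ) (hn : 1 ≤ n) :
    Real.log n - 1 ≤ ∑ d ∈ Finset.Ioc 0 n, ArithmeticFunction.vonMangoldt d / d ∧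
      ∑ d ∈ Finset.Ioc 0 n, ArithmeticFunction.vonMangoldt d / d ≤
        Real.log n + 0.106 + (Real.log n + 501) / n := by
  have hn0 : (0 : ℝ) < n := by exact_mod_cast hn
  obtain ⟨s1, s2⟩ := log_factorial_bounds n hn
  have hs : (n : ℝ) * ∑ d ∈ Finset.Ioc 0 n, ArithmeticFunction.vonMangoldt d / d =
      ∑ d ∈ Finset.Ioc 0 n, ArithmeticFunction.vonMangoldt d * ((n : ℝ) / d) := by
    rw [Finset.mul_sum]
    exact Finset.sum_congr rfl fun d _ => by ring
  have hlow : Real.log (n.factorial : ℝ) ≤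
      ∑ d ∈ Finset.Ioc 0 n, ArithmeticFunction.vonMangoldt d * ((n : ℝ) / d) := by
    rw [log_factorial_eq_sum n n le_rfl]
    exact Finset.sum_le_sum fun d _ => mul_le_mul_of_nonneg_left Nat.cast_div_le
      ArithmeticFunction.vonMangoldt_nonneg
  have hup : ∑ d ∈ Finset.Ioc 0 n, ArithmeticFunction.vonMangoldt d * ((n : ℝ) / d) ≤
      Real.log (n.factorial : ℝ) + Chebyshev.psi n := by
    rw [log_factorial_eq_sum n n le_rfl, psi_natCast, ← Finset.sum_add_distrib]
    refine Finset.sum_le_sum fun d hd => ?_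
    have hd0 : 0 < d := (Finset.mem_Ioc.1 hd).1
    have : (n : ℝ) / d ≤ ((n / d : ℕ) : ℝ) + 1 := by
      rw [div_le_iff₀ (by exact_mod_cast hd0)]
      have := Nat.lt_div_mul_add (a := n) (b := d) hd0
      exact_mod_cast (by nlinarith : n ≤ (n / d + 1) * d)
    calc _ ≤ ArithmeticFunction.vonMangoldt d * (((n / d : ℕ) : ℝ) + 1) :=
          mul_le_mul_of_nonneg_left this ArithmeticFunction.vonMangoldt_nonneg
      _ = _ := by ring
  have hpsi := psi_le_linear n
  rw [← hs] at hlow hup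
  constructor
  · refine le_of_mul_le_mul_left ?_ hn0
    linarith
  · refine le_of_mul_le_mul_left ?_ hn0
    have : (n : ℝ) * ((Real.log n + 501) / n) = Real.log n + 501 := by field_simp
    rw [mul_add, this]
    linarith

/-- Second Mertens theorem in the form of an upper bound beyond a starting point `y`; the constant
`1.109` is the width `1 + 0.106 + 0.003` of the interval in `sum_vonMangoldt_div_bounds`. -/
lemma sum_vonMangoldt_div_log_le (y x : ℕ) (hy : 180000 ≤ y) (hyx : y ≤ x) :
    ∑ n ∈ Finset.Ioc y x, ArithmeticFunction.vonMangoldt n / n * (1 / Real.log n) ≤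
      1.109 / Real.log y + (Real.log (Real.log x) - Real.log (Real.log y)) := by
  have hpos : ∀ n : ℕ, y ≤ n → 0 < Real.log n := fun n hn =>
    Real.log_pos (by exact_mod_cast (by omega : 1 < n))
  have hcast : ∀ n : ℕ, y ≤ n → (0 : ℝ) < n := fun n hn => by
    exact_mod_cast (by omega : 0 < n)
  have h1 := sum_mul_le_of_partial_sums (fun n => ArithmeticFunction.vonMangoldt n / n)
    (fun n => Real.log n - Real.log ((n - 1 : ℕ) : ℝ)) (fun n => 1 / Real.log n) 1.109 y x hyx
    (fun n hn => by have := hpos n hn; positivity)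
    (fun n hn => one_div_le_one_div_of_le (hpos n hn)
      (Real.log_le_log (hcast n hn) (by push_cast; linarith)))
    (fun n hn => by
      have hl := (sum_vonMangoldt_div_bounds y (by omega)).1
      have hu := (sum_vonMangoldt_div_bounds n (by omega)).2
      rw [← Finset.sum_Ioc_consecutive _ (Nat.zero_le y) hn] at hu
      have htel : ∑ i ∈ Finset.Ioc y n, (Real.log i - Real.log ((i - 1 : ℕ) : ℝ)) =
          Real.log n - Real.log y := by
        clear hu
        induction n, hn using Nat.le_induction with
        | base => simp
        | succ n hn ih =>
          rw [Finset.sum_Ioc_succ_top (by omega), ih]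
          simp
      have hsmall : (Real.log n + 501) / n ≤ 0.003 := by
        have hn' : (180000 : ℝ) ≤ n := by exact_mod_cast hy.trans hn
        rw [div_le_iff₀ (hcast n hn)]
        have := log_le_tangent n (hcast n hn)
        linarith
      rw [htel]
      linarith)
  have h2 : ∑ n ∈ Finset.Ioc y x,
      (Real.log n - Real.log ((n - 1 : ℕ) : ℝ)) * (1 / Real.log n) ≤
      Real.log (Real.log x) - Real.log (Real.log y) := by
    clear h1
    induction x, hyx using Nat.le_induction with
    | base => simp
    | succ x hx ih =>
      rw [Finset.sum_Ioc_succ_top (by omega)]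
      have p1 := hpos x hx
      have p2 := hpos (x + 1) (by omega)
      have h3 := Real.one_sub_inv_le_log_of_pos
        (x := Real.log ((x + 1 : ℕ) : ℝ) / Real.log x) (by positivity)
      rw [Real.log_div p2.ne' p1.ne', inv_div] at h3
      have h4 : (Real.log ((x + 1 : ℕ) : ℝ) - Real.log ((x + 1 - 1 : ℕ) : ℝ)) *
          (1 / Real.log ((x + 1 : ℕ) : ℝ)) =
          1 - Real.log x / Real.log ((x + 1 : ℕ) : ℝ) := by
        rw [Nat.add_sub_cancel]
        field_simp
      rw [h4]
      linarith
  rw [mul_one_div] at h1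
  linarith

lemma log_180663 : 12.1 ≤ Real.log 180663 := by
  rw [Real.le_log_iff_exp_le (by norm_num)]
  have h1 := Real.exp_one_lt_d9
  -- `exp 0.1 ≤ (1 - 1/20)⁻²`
  have h2 : Real.exp 0.05 ≤ 1 / 0.95 := by
    have := Real.add_one_le_exp (-0.05)
    rw [Real.exp_neg] at this
    rw [le_div_iff₀ (by norm_num)]
    have hp := Real.exp_pos 0.05
    calc Real.exp 0.05 * 0.95 ≤ Real.exp 0.05 * (Real.exp 0.05)⁻¹ := by
          gcongr
          linarith
      _ = 1 := mul_inv_cancel₀ hp.ne'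
  have e : Real.exp 12.1 = Real.exp 1 ^ 12 * Real.exp 0.05 ^ 2 := by
    rw [← Real.exp_nat_mul, ← Real.exp_nat_mul, ← Real.exp_add]
    norm_num
  rw [e]
  calc Real.exp 1 ^ 12 * Real.exp 0.05 ^ 2 ≤ 2.7182818286 ^ 12 * (1 / 0.95) ^ 2 := by gcongr
    _ ≤ 180663 := by norm_num

lemma prod_eulerFactor_Ioc_le (y x : ℕ) (hy : 180000 ≤ y) (hx : y ≤ x) :
    ∏ n ∈ Finset.Ioc y x, eulerFactor n ≤ Real.exp
      (∑ n ∈ Finset.Ioc y x, ArithmeticFunction.vonMangoldt n / n * (1 / Real.log n) +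
        (1 / (y : ℝ) - 1 / x)) := by
  induction x, hx using Nat.le_induction with
  | base => simp
  | succ x hx ih =>
    have hx0 : (0 : ℝ) < x := by exact_mod_cast (by omega : 0 < x)
    have hl : 0 < Real.log ((x + 1 : ℕ) : ℝ) :=
      Real.log_pos (by exact_mod_cast (by omega : 1 < x + 1))
    rw [Finset.prod_Ioc_succ_top (by omega), Finset.sum_Ioc_succ_top (by omega)]
    have hstep : eulerFactor (x + 1) ≤ Real.exp (ArithmeticFunction.vonMangoldt (x + 1) /
        ((x + 1 : ℕ) : ℝ) * (1 / Real.log ((x + 1 : ℕ) : ℝ)) +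
        (1 / (x : ℝ) - 1 / ((x + 1 : ℕ) : ℝ))) := by
      unfold eulerFactor
      split_ifs with hp
      · have e1 : ArithmeticFunction.vonMangoldt (x + 1) / ((x + 1 : ℕ) : ℝ) *
            (1 / Real.log ((x + 1 : ℕ) : ℝ)) + (1 / (x : ℝ) - 1 / ((x + 1 : ℕ) : ℝ)) =
            1 / x := by
          rw [ArithmeticFunction.vonMangoldt_apply_prime hp]
          field_simp
          ring
        rw [e1]
        have := Real.add_one_le_exp (1 / (x : ℝ))
        refine le_trans (le_of_eq ?_) this
        push_cast
        rw [add_sub_cancel_right]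
        field_simp
        ring
      · refine Real.one_le_exp (add_nonneg (mul_nonneg (div_nonneg
          ArithmeticFunction.vonMangoldt_nonneg (by positivity)) (by positivity)) ?_)
        rw [sub_nonneg]
        exact one_div_le_one_div_of_le hx0 (by push_cast; linarith)
    refine (mul_le_mul ih hstep (eulerFactor_nonneg _) (Real.exp_pos _).le).trans ?_
    rw [← Real.exp_add]
    refine Real.exp_le_exp.2 (le_of_eq ?_)
    ring

lemma prod_eulerFactor_split (N y x : ℕ) (hN : N = y + 1) (hx : y ≤ x) :
    ∏ n ∈ Finset.range (x + 1), eulerFactor n =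
      (∏ n ∈ Finset.range N, eulerFactor n) * ∏ n ∈ Finset.Ioc y x, eulerFactor n := by
  subst hN
  induction x, hx using Nat.le_induction with
  | base => simp
  | succ x hx ih =>
    rw [Finset.prod_range_succ, ih, Finset.prod_Ioc_succ_top (by omega), mul_assoc]

/-- The tail of the Euler product beyond `y`, compared with `log x / log y`. -/
lemma prod_eulerFactor_tail_le (y x : ℕ) (hy : 180000 ≤ y) (hx : y ≤ x)
    (hL : 12.1 ≤ Real.log y) :
    ∏ n ∈ Finset.Ioc y x, eulerFactor n ≤ 1.0966 * (Real.log x / 12.1) := by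
  have hLx : 0 < Real.log x := Real.log_pos (by exact_mod_cast (by omega : 1 < x))
  have hLy : 0 < Real.log y := by linarith
  have h1 := prod_eulerFactor_Ioc_le y x hy hx
  have h2 := sum_vonMangoldt_div_log_le y x hy hx
  have h3 : 1.109 / Real.log y ≤ 1.109 / 12.1 :=
    div_le_div_of_nonneg_left (by norm_num) (by norm_num) hL
  have hx1 : (0 : ℝ) ≤ 1 / x := by positivity
  have hy1 : (1 : ℝ) / y ≤ 1 / 180000 :=
    one_div_le_one_div_of_le (by norm_num) (by exact_mod_cast hy)
  have hnum : (1.109 : ℝ) / 12.1 + 1 / 180000 ≤ 0.0917 := by norm_num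
  have h4 : ∏ n ∈ Finset.Ioc y x, eulerFactor n ≤
      Real.exp (0.0917 + (Real.log (Real.log x) - Real.log (Real.log y))) :=
    h1.trans (Real.exp_le_exp.2 (by linarith))
  rw [Real.exp_add, Real.exp_sub, Real.exp_log hLx, Real.exp_log hLy] at h4
  -- `exp 0.0917 ≤ (1 - 0.0917 / 10) ^ (-10)`
  have h5 : Real.exp 0.0917 ≤ 1.0966 := by
    have h6 : Real.exp 0.00917 ≤ 1 / 0.99083 := by
      have := Real.add_one_le_exp (-0.00917)
      rw [Real.exp_neg] at this
      rw [le_div_iff₀ (by norm_num)]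
      have hp := Real.exp_pos 0.00917
      calc Real.exp 0.00917 * 0.99083 ≤ Real.exp 0.00917 * (Real.exp 0.00917)⁻¹ := by
            gcongr
            linarith
        _ = 1 := mul_inv_cancel₀ hp.ne'
    have e : Real.exp 0.0917 = Real.exp 0.00917 ^ 10 := by
      rw [← Real.exp_nat_mul]
      norm_num
    rw [e]
    calc Real.exp 0.00917 ^ 10 ≤ (1 / 0.99083) ^ 10 := by gcongr
      _ ≤ _ := by norm_num
  have h6 : Real.log x / Real.log y ≤ Real.log x / 12.1 :=
    div_le_div_of_nonneg_left hLx.le (by norm_num) hL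
  exact h4.trans (mul_le_mul h5 h6 (by positivity) (by norm_num))

/-- Mertens' product theorem with the constant `e ^ γ = 1.781…` replaced by `1.9545`. -/
theorem prod_eulerFactor_le_log (x : ℕ) (hx : 180663 ≤ x) :
    ∏ n ∈ Finset.range (x + 1), eulerFactor n ≤ 1.9545 * Real.log x := by
  have hL := log_180663
  have h1 := prod_eulerFactor_tail_le 180663 x (by norm_num) hx (by rw [Nat.cast_ofNat]; exact hL)
  have hLx : 0 < Real.log x := Real.log_pos (by exact_mod_cast (by omega : 1 < x))
  rw [prod_eulerFactor_split 180664 180663 x rfl hx]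
  refine (mul_le_mul prod_eulerFactor_180664 h1
    (Finset.prod_nonneg fun _ _ => eulerFactor_nonneg _) (by norm_num)).trans ?_
  calc (21.563 : ℝ) * (1.0966 * (Real.log x / 12.1))
      = 21.563 * (1.0966 / 12.1) * Real.log x := by ring
    _ ≤ 1.9545 * Real.log x := by
        refine mul_le_mul_of_nonneg_right ?_ hLx.le
        norm_num

/-! ### Products over the first `k` primes -/

/-- Tangent-line bounds for the logarithm at a reference point `c`. -/
lemma log_tangent_bounds (c t : ℝ) (hc : 0 < c) (ht : 0 < t) :
    Real.log c + 1 - c / t ≤ Real.log t ∧ Real.log t ≤ Real.log c + t / c - 1 := by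
  have h1 := Real.one_sub_inv_le_log_of_pos (div_pos ht hc)
  have h2 := Real.log_le_sub_one_of_pos (div_pos ht hc)
  rw [Real.log_div ht.ne' hc.ne'] at h1 h2
  rw [inv_div] at h1
  constructor <;> linarith

/-- If `K ≤ β x / t`, where `t = log x - 6/5`, then `K log (K log 2) ≤ x - 1`, provided a quadratic
inequality in `t` holds; there `log t` is bounded below through its tangent at `c`. -/
lemma mul_log_le_of_le (β γ c l K x t : ℝ) (hK : 0 < K) (ht : 0 < t) (hβ : 0 < β)
    (hx : 100000 ≤ x) (hKx : K ≤ β * (x / t)) (hlx : Real.log x = t + 1.2)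
    (hγ : Real.log (β * Real.log 2) ≤ γ) (hc : 0 < c) (hl : l ≤ Real.log c)
    (hq : β * (t ^ 2 + (0.2 - l + γ) * t + c) ≤ (1 - 1 / 100000) * t ^ 2) :
    K * Real.log (K * Real.log 2) ≤ x - 1 := by
  have hx0 : 0 < x := by linarith
  have h2 : 0 < Real.log 2 := Real.log_pos (by norm_num)
  have hlog : Real.log (K * Real.log 2) ≤ t + 0.2 - l + c / t + γ := by
    have h3 : Real.log (K * Real.log 2) ≤ Real.log ((β * Real.log 2) * (x / t)) := by
      refine Real.log_le_log (by positivity) ?_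
      calc K * Real.log 2 ≤ β * (x / t) * Real.log 2 := by gcongr
        _ = _ := by ring
    rw [Real.log_mul (x := β * Real.log 2) (by positivity) (by positivity),
      Real.log_div hx0.ne' ht.ne', hlx] at h3
    have := (log_tangent_bounds c t hc ht).1
    linarith
  rcases le_total (t + 0.2 - l + c / t + γ) 0 with hA | hA
  · have : K * Real.log (K * Real.log 2) ≤ 0 :=
      mul_nonpos_of_nonneg_of_nonpos hK.le (hlog.trans hA)
    linarith
  · calc K * Real.log (K * Real.log 2) ≤ β * (x / t) * (t + 0.2 - l + c / t + γ) :=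
          (mul_le_mul_of_nonneg_left hlog hK.le).trans (mul_le_mul_of_nonneg_right hKx hA)
      _ = β * (t ^ 2 + (0.2 - l + γ) * t + c) * (x / t ^ 2) := by
          field_simp
          ring
      _ ≤ (1 - 1 / 100000) * t ^ 2 * (x / t ^ 2) := by gcongr
      _ = (1 - 1 / 100000) * x := by field_simp
      _ ≤ x - 1 := by linarith

/-- For a prime `x` with `K = π(x)`, this bounds the increment `1 / (x - 1)` of the Euler factor at
`x` by `1 / (K log (K log 2))`, essentially the logarithmic derivative of `log (K log 2)`. It is
deduced from `π(x) ≤ 292 + 1.106 x / (log x - 6/5)`; the two ranges of `t = log x - 6/5` differ in the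
rounding `β` of `1.106` that absorbs the constant `292`. -/
lemma count_mul_log_le (x : ℕ) (hx : 180664 ≤ x) (hL : Real.log x ≤ 23)
    (hK : 0 < Nat.count Nat.Prime (x + 1)) :
    (Nat.count Nat.Prime (x + 1) : ℝ) *
      Real.log ((Nat.count Nat.Prime (x + 1) : ℝ) * Real.log 2) ≤ (x : ℝ) - 1 := by
  have hpi := count_prime_le x (by omega)
  have hx' : (180664 : ℝ) ≤ x := by exact_mod_cast hx
  have hL1 : 12.1 ≤ Real.log x :=
    log_180663.trans (Real.log_le_log (by norm_num) (by linarith))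
  have hK' : (0 : ℝ) < Nat.count Nat.Prime (x + 1) := by exact_mod_cast hK
  generalize (Nat.count Nat.Prime (x + 1) : ℝ) = K at hpi hK' ⊢
  obtain ⟨t, ht⟩ : ∃ t, Real.log x = t + 1.2 := ⟨Real.log x - 1.2, by ring⟩
  rw [ht, add_sub_cancel_right] at hpi
  have ht0 : 0 < t := by linarith
  have l2 := Real.log_two_gt_d9
  have l2' := Real.log_two_lt_d9
  have l3 := log_three_bounds
  rcases le_total t 13.8 with h | h
  · refine mul_log_le_of_le 1.13 (-0.2167) 13.8 2.61 K x t hK' ht0 (by norm_num) (by linarith)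
      ?_ ht ?_ (by norm_num) ?_ ?_
    · have : 292 ≤ 0.024 * ((x : ℝ) / t) := by
        rw [← mul_div_assoc, le_div_iff₀ ht0]
        linarith
      linarith
    · have := Real.log_le_sub_one_of_pos (by positivity : 0 < 1.13 * Real.log 2)
      linarith
    · have h1 := (log_tangent_bounds (2 ^ 4) 13.8 (by norm_num) (by norm_num)).1
      rw [Real.log_pow] at h1
      norm_num at h1 ⊢
      linarith
    · nlinarith
  · have hx2 : (3200000 : ℝ) ≤ x := by
      have h1 : Real.exp 15 ≤ x := (Real.le_log_iff_exp_le (by linarith)).1 (by linarith)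
      have h2 : Real.exp 15 = Real.exp 1 ^ 15 := by
        rw [← Real.exp_nat_mul]
        norm_num
      have h3 : (2.718 : ℝ) ^ 15 ≤ Real.exp 1 ^ 15 := by
        have := Real.exp_one_gt_d9
        gcongr
        linarith
      have h4 : (3200000 : ℝ) ≤ 2.718 ^ 15 := by norm_num
      linarith
    refine mul_log_le_of_le 1.108 (-0.2635) 21.8 3.08 K x t hK' ht0 (by norm_num) (by linarith)
      ?_ ht ?_ (by norm_num) ?_ ?_
    · have : 292 ≤ 0.002 * ((x : ℝ) / t) := by
        rw [← mul_div_assoc, le_div_iff₀ ht0]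
        linarith
      linarith
    · have h1 := (log_tangent_bounds (3 / 2 ^ 2) (1.108 * Real.log 2) (by norm_num)
        (by positivity)).2
      rw [Real.log_div (by norm_num) (by norm_num), Real.log_pow] at h1
      push_cast at h1
      have h2 : 1.108 * Real.log 2 / (3 / 2 ^ 2) = 1.108 * 4 / 3 * Real.log 2 := by ring
      rw [h2] at h1
      linarith [l3.2]
    · have h1 := (log_tangent_bounds (2 ^ 6 / 3) 21.8 (by norm_num) (by norm_num)).1
      rw [Real.log_div (by norm_num) (by norm_num), Real.log_pow] at h1
      push_cast at h1
      have h2 : (2 : ℝ) ^ 6 / 3 / 21.8 ≤ 0.9786 := by norm_num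
      linarith [l3.2]
    · nlinarith

/-- Beyond `e ^ 23` the ratio `2.32 / 1.9545` leaves enough room for Mertens' product bound together
with `π(x) log x ≥ ψ(x) ≥ 0.92 x`. -/
lemma prod_eulerFactor_le_of_large (x : ℕ) (hx : 180664 ≤ x) (hL : 23 ≤ Real.log x) :
    ∏ n ∈ Finset.range (x + 1), eulerFactor n ≤
      2.32 * Real.log ((Nat.count Nat.Prime (x + 1) : ℝ) * Real.log 2) := by
  have hx0 : (0 : ℝ) < x := by exact_mod_cast (by omega : 0 < x)
  have hx' : (180664 : ℝ) ≤ x := by exact_mod_cast hx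
  have hM := prod_eulerFactor_le_log x (by omega)
  have hpsi := le_psi x (by omega)
  have hpc : Chebyshev.psi x ≤ (Nat.count Nat.Prime (x + 1) : ℝ) * Real.log x :=
    Chebyshev.psi_le_primeCounting_mul_log x
  have htan := log_le_tangent x hx0
  have hx3 : (1900000 : ℝ) ≤ x := by linarith
  generalize (Nat.count Nat.Prime (x + 1) : ℝ) = K at hpc ⊢
  have l2 := Real.log_two_gt_d9
  have l2' := Real.log_two_lt_d9
  have l3 := log_three_bounds
  have hL0 : 0 < Real.log x := by linarith
  have hKx : 0.92 * ((x : ℝ) / Real.log x) ≤ K := by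
    rw [← mul_div_assoc, div_le_iff₀ hL0]
    linarith
  have h1 : Real.log ((0.92 * Real.log 2) * (x / Real.log x)) ≤ Real.log (K * Real.log 2) := by
    refine Real.log_le_log (by positivity) ?_
    calc 0.92 * Real.log 2 * (x / Real.log x) = 0.92 * (x / Real.log x) * Real.log 2 := by ring
      _ ≤ K * Real.log 2 := by gcongr
  rw [Real.log_mul (by positivity) (by positivity), Real.log_div hx0.ne' hL0.ne'] at h1
  have h2 : -0.451 ≤ Real.log (0.92 * Real.log 2) := by
    have h3 : Real.log 0.63769 ≤ Real.log (0.92 * Real.log 2) :=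
      Real.log_le_log (by norm_num) (by linarith)
    have h4 := (log_tangent_bounds (2 / 3) 0.63769 (by norm_num) (by norm_num)).1
    rw [Real.log_div (by norm_num) (by norm_num)] at h4
    have h5 : (2 : ℝ) / 3 / 0.63769 ≤ 1.0455 := by norm_num
    linarith [l3.2]
  have h3 : Real.log 23 ≤ 3.1364 := by
    have h4 := (log_tangent_bounds (2 ^ 3 * 3) 23 (by norm_num) (by norm_num)).2
    rw [Real.log_mul (by norm_num) (by norm_num), Real.log_pow] at h4
    push_cast at h4
    have h5 : (23 : ℝ) / (2 ^ 3 * 3) ≤ 0.95834 := by norm_num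
    linarith [l3.2]
  have h4 := (log_tangent_bounds 23 (Real.log x) (by norm_num) hL0).2
  linarith

/-- The Euler product over all primes below `N` in terms of the enumeration of the primes. -/
lemma prod_range_eulerFactor (N : ℕ) :
    ∏ n ∈ Finset.range N, eulerFactor n =
      ∏ i ∈ Finset.range (Nat.count Nat.Prime N), eulerFactor (Nat.nth Nat.Prime i) := by
  induction N with
  | zero => simp
  | succ N ih =>
    rw [Finset.prod_range_succ, ih, Nat.count_succ]
    split_ifs with hp
    · rw [Finset.prod_range_succ, Nat.nth_count hp]
    · rw [add_zero, eulerFactor, if_neg hp, mul_one]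

lemma count_nth_prime_succ (k : ℕ) : Nat.count Nat.Prime (Nat.nth Nat.Prime k + 1) = k + 1 := by
  rw [Nat.count_succ, if_pos (Nat.prime_nth_prime k),
    Nat.count_nth_of_infinite Nat.infinite_setOfPred_prime]

lemma one_le_eulerFactor (n : ℕ) : 1 ≤ eulerFactor n := by
  unfold eulerFactor
  split_ifs with hp
  · have : (2 : ℝ) ≤ n := by exact_mod_cast hp.two_le
    rw [le_div_iff₀ (by linarith)]
    linarith
  · exact le_rfl

lemma eulerFactor_anti {p q : ℕ} (hp : p.Prime) (hq : q.Prime) (h : p ≤ q) :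
    eulerFactor q ≤ eulerFactor p := by
  have h2 : (2 : ℝ) ≤ p := by exact_mod_cast hp.two_le
  have h3 : (p : ℝ) ≤ q := by exact_mod_cast h
  rw [eulerFactor, if_pos hq, eulerFactor, if_pos hp, div_le_div_iff₀ (by linarith) (by linarith)]
  nlinarith

lemma prod_nth_mono {j k : ℕ} (h : j ≤ k) :
    ∏ i ∈ Finset.range j, eulerFactor (Nat.nth Nat.Prime i) ≤
      ∏ i ∈ Finset.range k, eulerFactor (Nat.nth Nat.Prime i) := by
  induction k, h using Nat.le_induction with
  | base => exact le_rfl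
  | succ k _ ih =>
    rw [Finset.prod_range_succ]
    exact ih.trans (le_mul_of_one_le_right
      (Finset.prod_nonneg fun _ _ => eulerFactor_nonneg _) (one_le_eulerFactor _))

lemma prod_nth_16395 :
    ∏ i ∈ Finset.range 16395, eulerFactor (Nat.nth Nat.Prime i) ≤ 21.563 := by
  have h : ∀ {N k : ℕ} {c : ℝ}, Nat.count Nat.Prime N = k →
      ∏ n ∈ Finset.range N, eulerFactor n ≤ c →
      ∏ i ∈ Finset.range k, eulerFactor (Nat.nth Nat.Prime i) ≤ c := by
    intro N k c h1 h2
    rwa [prod_range_eulerFactor, h1] at h2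
  exact h count_prime_180664 prod_eulerFactor_180664

lemma log_log_15985 : 9.2945 ≤ Real.log (15985 * Real.log 2) := by
  have l2 := Real.log_two_gt_d9
  rw [Real.le_log_iff_exp_le (by positivity)]
  have h1 := Real.exp_one_lt_d9
  -- `exp 0.2945 ≤ (1 - 0.02945) ^ (-10)`
  have h2 : Real.exp 0.02945 ≤ 1 / 0.97055 := by
    have := Real.add_one_le_exp (-0.02945)
    rw [Real.exp_neg] at this
    rw [le_div_iff₀ (by norm_num)]
    have hp := Real.exp_pos 0.02945
    calc Real.exp 0.02945 * 0.97055 ≤ Real.exp 0.02945 * (Real.exp 0.02945)⁻¹ := by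
          gcongr
          linarith
      _ = 1 := mul_inv_cancel₀ hp.ne'
  have e : Real.exp 9.2945 = Real.exp 1 ^ 9 * Real.exp 0.02945 ^ 10 := by
    rw [← Real.exp_nat_mul, ← Real.exp_nat_mul, ← Real.exp_add]
    norm_num
  rw [e]
  calc Real.exp 1 ^ 9 * Real.exp 0.02945 ^ 10 ≤ 2.7182818286 ^ 9 * (1 / 0.97055) ^ 10 := by gcongr
    _ ≤ 15985 * 0.693 := by norm_num
    _ ≤ 15985 * Real.log 2 := by linarith

/-- The induction is on `k`: as long as the new prime is at most `e ^ 23`, its Euler factor is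
compared with the growth of the right-hand side, and beyond that the bound is direct. -/
lemma prod_nth_le_of_large (k : ℕ) (hk : 16395 ≤ k) :
    ∏ i ∈ Finset.range k, eulerFactor (Nat.nth Nat.Prime i) ≤
      2.32 * Real.log ((k : ℝ) * Real.log 2) := by
  have l2 : 0 < Real.log 2 := Real.log_pos (by norm_num)
  induction k, hk using Nat.le_induction with
  | base =>
    have h1 : Real.log (15985 * Real.log 2) ≤ Real.log (((16395 : ℕ) : ℝ) * Real.log 2) := by
      refine Real.log_le_log (by positivity) (mul_le_mul_of_nonneg_right ?_ l2.le)
      norm_num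
    refine prod_nth_16395.trans (le_trans ?_
      (mul_le_mul_of_nonneg_left (log_log_15985.trans h1) (by norm_num)))
    norm_num
  | succ k hk ih =>
    obtain ⟨x, hx⟩ : ∃ x, Nat.nth Nat.Prime k = x := ⟨_, rfl⟩
    have hxp : x.Prime := hx ▸ Nat.prime_nth_prime k
    have hcount : Nat.count Nat.Prime (x + 1) = k + 1 := hx ▸ count_nth_prime_succ k
    have hxlarge : 180664 ≤ x := by
      by_contra hlt
      have h1 : Nat.count Nat.Prime (x + 1) ≤ Nat.count Nat.Prime 180664 :=
        Nat.count_monotone _ (by omega)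
      rw [hcount, count_prime_180664] at h1
      omega
    rcases le_total (Real.log x) 23 with hL | hL
    · have hstep := count_mul_log_le x hxlarge hL (by omega)
      rw [hcount] at hstep
      have hx' : (180664 : ℝ) ≤ x := by exact_mod_cast hxlarge
      have hk0 : (0 : ℝ) < k := by exact_mod_cast (by omega : 0 < k)
      rw [Finset.prod_range_succ, hx, eulerFactor, if_pos hxp]
      have hinc : 1 / ((k : ℝ) + 1) ≤
          Real.log (((k + 1 : ℕ) : ℝ) * Real.log 2) - Real.log (k * Real.log 2) := by
        rw [← Real.log_div (by positivity) (by positivity), mul_div_mul_right _ _ l2.ne']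
        have h1 := Real.one_sub_inv_le_log_of_pos (x := ((k + 1 : ℕ) : ℝ) / k) (by positivity)
        refine le_trans (le_of_eq ?_) h1
        push_cast
        field_simp
        ring
      have hpos : 0 < 1 / ((k : ℝ) + 1) := by positivity
      have hl : Real.log (k * Real.log 2) / ((x : ℝ) - 1) ≤ 1 / ((k : ℝ) + 1) := by
        rw [div_le_div_iff₀ (by linarith) (by positivity)]
        have : Real.log (k * Real.log 2) * ((k : ℝ) + 1) ≤
            Real.log (((k + 1 : ℕ) : ℝ) * Real.log 2) * ((k : ℝ) + 1) :=
          mul_le_mul_of_nonneg_right (by linarith) (by positivity)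
        push_cast at hstep this
        linarith
      have hfac : (x : ℝ) / (x - 1) = 1 + 1 / (x - 1) := by
        have : (x : ℝ) - 1 ≠ 0 := by linarith
        field_simp
        ring
      calc _ ≤ 2.32 * Real.log (k * Real.log 2) * ((x : ℝ) / (x - 1)) :=
            mul_le_mul_of_nonneg_right ih (div_nonneg (by linarith) (by linarith))
        _ = 2.32 * (Real.log (k * Real.log 2) + Real.log (k * Real.log 2) / (x - 1)) := by
            rw [hfac]
            ring
        _ ≤ _ := mul_le_mul_of_nonneg_left (by linarith) (by norm_num)
    · have h1 := prod_eulerFactor_le_of_large x hxlarge hL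
      rwa [prod_range_eulerFactor, hcount] at h1

/-- The upper bound for `n / φ(n)` when `n` is a product of the first `k` primes. -/
theorem prod_nth_le (k : ℕ) (hk : 15985 ≤ k) :
    ∏ i ∈ Finset.range k, eulerFactor (Nat.nth Nat.Prime i) ≤
      2.32 * Real.log ((k : ℝ) * Real.log 2) := by
  rcases le_total 16395 k with h | h
  · exact prod_nth_le_of_large k h
  · have h1 := (prod_nth_mono h).trans prod_nth_16395
    have h2 : Real.log (15985 * Real.log 2) ≤ Real.log ((k : ℝ) * Real.log 2) := by
      have : (15985 : ℝ) ≤ k := by exact_mod_cast hk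
      have l2 : 0 < Real.log 2 := Real.log_pos (by norm_num)
      exact Real.log_le_log (by positivity) (mul_le_mul_of_nonneg_right this l2.le)
    have h3 := log_log_15985
    linarith

/-! ### Reduction to the first `ω(n)` primes -/

/-- The `i`-th smallest element of a set of primes is at least the `i`-th prime. -/
lemma prod_primes_le_prod_nth (S : Finset ℕ) (hS : ∀ p ∈ S, p.Prime) :
    ∏ p ∈ S, eulerFactor p ≤ ∏ i ∈ Finset.range S.card, eulerFactor (Nat.nth Nat.Prime i) := by
  induction S using Finset.induction_on_max with
  | empty => simp
  | insert m S hm ih =>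
    have hmS : m ∉ S := fun h => (hm m h).false
    have hmp := hS m (Finset.mem_insert_self _ _)
    have hS' : ∀ p ∈ S, p.Prime := fun p hp => hS p (Finset.mem_insert_of_mem hp)
    rw [Finset.prod_insert hmS, Finset.card_insert_of_notMem hmS, Finset.prod_range_succ, mul_comm]
    have hcard : S.card ≤ Nat.count Nat.Prime m := by
      rw [Nat.count_eq_card_filter_range]
      exact Finset.card_le_card fun p hp =>
        Finset.mem_filter.2 ⟨Finset.mem_range.2 (hm p hp), hS' p hp⟩
    have hle : Nat.nth Nat.Prime S.card ≤ m := by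
      calc Nat.nth Nat.Prime S.card ≤ Nat.nth Nat.Prime (Nat.count Nat.Prime m) :=
            Nat.nth_monotone Nat.infinite_setOfPred_prime hcard
        _ = m := Nat.nth_count hmp
    exact mul_le_mul (ih hS') (eulerFactor_anti (Nat.prime_nth_prime _) hmp hle)
      (eulerFactor_nonneg _) (Finset.prod_nonneg fun _ _ => eulerFactor_nonneg _)

lemma div_totient_eq (n : ℕ) (hn : n ≠ 0) :
    (n : ℝ) / (Nat.totient n : ℝ) = ∏ p ∈ n.primeFactors, eulerFactor p := by
  have h1 : (Nat.totient n : ℝ) = n * ∏ p ∈ n.primeFactors, (1 - (p : ℝ)⁻¹) := by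
    have := congrArg (fun q : ℚ => (q : ℝ)) (Nat.totient_eq_mul_prod_factors n)
    push_cast at this
    exact this
  have hn' : (n : ℝ) ≠ 0 := by exact_mod_cast hn
  rw [h1, div_mul_eq_div_div, div_self hn', one_div, ← Finset.prod_inv_distrib]
  refine Finset.prod_congr rfl fun p hp => ?_
  have hpp := Nat.prime_of_mem_primeFactors hp
  have h2 : (2 : ℝ) ≤ p := by exact_mod_cast hpp.two_le
  have h3 : (p : ℝ) - 1 ≠ 0 := by linarith
  rw [eulerFactor, if_pos hpp]
  field_simp

lemma two_pow_le_card_divisors (n : ℕ) (hn : n ≠ 0) :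
    2 ^ n.primeFactors.card ≤ n.divisors.card := by
  rw [Nat.card_divisors hn, ← Finset.prod_const]
  refine Finset.prod_le_prod' fun p hp => ?_
  have := Nat.Prime.factorization_pos_of_dvd (Nat.prime_of_mem_primeFactors hp) hn
    (Nat.dvd_of_mem_primeFactors hp)
  omega

/-- `σ(n) φ(n) ≤ n²`; on prime powers `σ(pᵃ) φ(pᵃ) = p ^ (a - 1) (p ^ (a + 1) - 1)`. -/
lemma sum_divisors_mul_totient_le (n : ℕ) :
    (∑ d ∈ n.divisors, d) * Nat.totient n ≤ n ^ 2 := by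
  induction n using Nat.recOnPosPrimePosCoprime with
  | prime_pow p a hp ha =>
    rw [Nat.sum_divisors_prime_pow hp, Nat.totient_prime_pow hp ha]
    obtain ⟨b, rfl⟩ : ∃ b, a = b + 1 := ⟨a - 1, by omega⟩
    have h1 := Nat.geomSum_eq hp.two_le (b + 1 + 1)
    have h2 : (∑ k ∈ Finset.range (b + 1 + 1), p ^ k) * (p - 1) ≤ p ^ (b + 1 + 1) := by
      rw [h1]
      exact (Nat.div_mul_le_self _ _).trans (Nat.sub_le _ _)
    calc _ = (∑ k ∈ Finset.range (b + 1 + 1), p ^ k) * (p - 1) * p ^ b := by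
          rw [Nat.add_sub_cancel]
          ring
      _ ≤ p ^ (b + 1 + 1) * p ^ b := Nat.mul_le_mul_right _ h2
      _ = _ := by ring
  | zero => simp
  | one => simp
  | coprime a b ha hb hab iha ihb =>
    rw [hab.sum_divisors_mul, Nat.totient_mul hab]
    calc _ = (∑ d ∈ a.divisors, d) * Nat.totient a * ((∑ d ∈ b.divisors, d) * Nat.totient b) := by
          ring
      _ ≤ a ^ 2 * b ^ 2 := Nat.mul_le_mul iha ihb
      _ = _ := by ring

/-- Let `n` satisfy `ω(n) ≥ 15985`. Then `σ(n)/n ≤ n/φ(n) ≤ 2.32·log(log τ(n))`. -/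
theorem stmt_18 (n : ℕ) (hn : 15985 ≤ n.primeFactors.card) :
    (sigmaFn n : ℝ) / (n : ℝ) ≤ (n : ℝ) / (Nat.totient n : ℝ) ∧
    (n : ℝ) / (Nat.totient n : ℝ) ≤ 2.32 * Real.log (Real.log (tauFn n)) := by
  have hn0 : n ≠ 0 := by
    rintro rfl
    simp at hn
  have hpos : 0 < n := Nat.pos_of_ne_zero hn0
  have hφ : 0 < Nat.totient n := Nat.totient_pos.2 hpos
  constructor
  · rw [div_le_div_iff₀ (by exact_mod_cast hpos) (by exact_mod_cast hφ), ← sq]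
    exact_mod_cast sum_divisors_mul_totient_le n
  · have l2 : 0 < Real.log 2 := Real.log_pos (by norm_num)
    have hk : (0 : ℝ) < n.primeFactors.card := by exact_mod_cast (by omega)
    have hτ : (n.primeFactors.card : ℝ) * Real.log 2 ≤ Real.log (tauFn n) := by
      rw [← Real.log_pow]
      exact Real.log_le_log (by positivity) (by exact_mod_cast two_pow_le_card_divisors n hn0)
    rw [div_totient_eq n hn0]
    refine (prod_primes_le_prod_nth _ fun p hp => Nat.prime_of_mem_primeFactors hp).trans
      ((prod_nth_le _ hn).trans ?_)
    exact mul_le_mul_of_nonneg_left (Real.log_le_log (by positivity) hτ) (by norm_num)
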